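/- arXiv:1312.1325 — 2 statements merged into one kernel-verified Lean document; each statement's English description precedes it below -/
import Mathlib

section
/- Let Q be a prime power with Q ≡ ±2 (mod 5) and Q > 13, and α ∈ F_{Q^2}^*. Then x^(2Q+3) + α·x permutes F_{Q^2} if and only if α^(2Q−2) − 3α^(Q−1) + 1 = 0. -/
/-!
Let `K` be the subfield with `Q` elements. On `L = F_{Q²}` the map is `x ↦ x * (N(x)² + α)` with
`N` the norm to `K`, so taking norms reduces bijectivity to that of the quintic
`t⁵ + a t³ + b t` on `K`, where `a` and `b` are the trace and the norm of `α`; the condition on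
`α` becomes `a² = 5b`.

If `a² = 5b`, the quintic is a Dickson polynomial, and the difference of its values at `s` and `t`
is `s - t` times a value of the form `x² + xy - y²`. This form is anisotropic because `Q ≡ ±2`
modulo `5`.

Conversely, if the quintic permutes `K`, then its `r`-th power sums over `K` vanish (Hermite), so
that for `5r = Q - 1 + 2j` the coefficient of `X ^ j` in `(1 + aX + bX²) ^ r` is zero. This
coefficient depends only on the residue of `r` modulo a power of the characteristic. The indices
`j = 2`, or `j = 4` and `j = 9`, give `a² = 5b` except in characteristics `2`, `3`, `7` and `17`,
where integer factors vanish and other indices take their place.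
-/

open Function Polynomial

/-- The polynomial function `t⁵ + a t³ + b t`, to which the theorem is reduced. -/
def oddQuintic {R : Type*} [CommRing R] (a b t : R) : R :=
  t ^ 5 + a * t ^ 3 + b * t

/-- The quadratic polynomial `1 + a X + b X²`; it describes the quintic through
`oddQuintic a b t = t⁵ * (unitQuadratic a b).eval (t⁻²)` for `t ≠ 0`. -/
noncomputable def unitQuadratic {R : Type*} [CommRing R] (a b : R) : R[X] :=
  1 + C a * X + C b * X ^ 2

section NormReduction

variable {K L : Type*} [Field K] [Field L] [Algebra K L] [Finite L]

theorem bijective_mul_comp_norm_iff (h : K → L) :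
    Bijective (fun x : L ↦ x * h (Algebra.norm K x)) ↔
      Bijective (fun t : K ↦ t * Algebra.norm K (h t)) := by
  have : Finite K := Finite.of_injective _ (algebraMap K L).injective
  have norm_comp (x : L) : Algebra.norm K (x * h (Algebra.norm K x)) =
      Algebra.norm K x * Algebra.norm K (h (Algebra.norm K x)) := map_mul _ _ _
  refine ⟨fun hf ↦ Finite.surjective_iff_bijective.mp fun s ↦ ?_,
    fun hg ↦ Finite.injective_iff_bijective.mp fun x y hxy ↦ ?_⟩
  · obtain ⟨y, rfl⟩ := FiniteField.norm_surjective K L s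
    obtain ⟨x, rfl⟩ := hf.surjective y
    exact ⟨Algebra.norm K x, (norm_comp x).symm⟩
  · have hnorm : Algebra.norm K x = Algebra.norm K y := hg.injective <| by
      simpa only [norm_comp] using congrArg (Algebra.norm K) hxy
    rw [← hnorm] at hxy
    refine (mul_eq_mul_right_iff.mp hxy).elim id fun h0 ↦ ?_
    have hx : Algebra.norm K x = 0 := hg.injective (by simp [h0])
    rw [Algebra.norm_eq_zero_iff.mp hx, Algebra.norm_eq_zero_iff.mp (hnorm.symm.trans hx)]

theorem algebraMap_norm_of_finrank_eq_two (hL : Module.finrank K L = 2) (x : L) :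
    algebraMap K L (Algebra.norm K x) = x * x ^ Nat.card K := by
  simp [FiniteField.algebraMap_norm_eq_prod_pow, hL, Finset.prod_range_succ]

theorem algebraMap_trace_of_finrank_eq_two (hL : Module.finrank K L = 2) (x : L) :
    algebraMap K L (Algebra.trace K L x) = x + x ^ Nat.card K := by
  simp [FiniteField.algebraMap_trace_eq_sum_pow, hL, Finset.sum_range_succ]

theorem norm_algebraMap_add_of_finrank_eq_two (hL : Module.finrank K L = 2) (t : K) (x : L) :
    Algebra.norm K (algebraMap K L t + x) =
      t ^ 2 + Algebra.trace K L x * t + Algebra.norm K x := by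
  have : Finite K := Finite.of_injective _ (algebraMap K L).injective
  have := Fintype.ofFinite K
  have frobenius_add : (algebraMap K L t + x) ^ Nat.card K =
      algebraMap K L t + x ^ Nat.card K := by
    rw [Nat.card_eq_fintype_card]
    simpa using map_add (FiniteField.frobeniusAlgHom K L) (algebraMap K L t) x
  apply (algebraMap K L).injective
  simp only [map_add, map_mul, map_pow, algebraMap_norm_of_finrank_eq_two hL,
    algebraMap_trace_of_finrank_eq_two hL, frobenius_add]
  ring

theorem bijective_pow_add_mul_iff_oddQuintic (hL : Module.finrank K L = 2) (α : L) :
    Bijective (fun x : L ↦ x ^ (2 * Nat.card K + 3) + α * x) ↔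
      Bijective (oddQuintic (Algebra.trace K L α) (Algebra.norm K α)) := by
  convert bijective_mul_comp_norm_iff (fun t : K ↦ algebraMap K L (t ^ 2) + α) using 2
  · ext x
    rw [map_pow, algebraMap_norm_of_finrank_eq_two hL]
    ring
  · ext t
    rw [norm_algebraMap_add_of_finrank_eq_two hL, oddQuintic]
    ring

theorem trace_sq_eq_five_mul_norm_iff (hL : Module.finrank K L = 2) {x : L} (hx : x ≠ 0) :
    Algebra.trace K L x ^ 2 = 5 * Algebra.norm K x ↔
      x ^ (2 * Nat.card K - 2) - 3 * x ^ (Nat.card K - 1) + 1 = 0 := by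
  have : Finite K := Finite.of_injective _ (algebraMap K L).injective
  obtain ⟨n, hn⟩ : ∃ n, Nat.card K = n + 1 := Nat.exists_eq_succ_of_ne_zero Nat.card_pos.ne'
  have factor : (x + x ^ (n + 1)) ^ 2 - 5 * (x * x ^ (n + 1)) =
      x ^ 2 * (x ^ (2 * n) - 3 * x ^ n + 1) := by ring
  rw [← (algebraMap K L).injective.eq_iff, ← sub_eq_zero, map_pow, map_mul, map_ofNat,
    algebraMap_trace_of_finrank_eq_two hL, algebraMap_norm_of_finrank_eq_two hL, hn, factor,
    mul_eq_zero_iff_left (pow_ne_zero 2 hx), Nat.add_sub_cancel,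
    show 2 * (n + 1) - 2 = 2 * n by omega]

end NormReduction

theorem exists_subfield_natCard_eq {F : Type*} [Field F] [Finite F] {Q n : ℕ} (hn : n ≠ 0)
    (hF : Nat.card F = Q ^ n) : ∃ K : Subfield F, Nat.card K = Q := by
  have := Fintype.ofFinite F
  obtain ⟨p, hchar⟩ := CharP.exists F
  have : Fact p.Prime := ⟨CharP.char_is_prime F p⟩
  let := ZMod.algebra F p
  have hcard : p ^ Module.finrank (ZMod p) F = Q ^ n :=
    (FiniteField.pow_finrank_eq_natCard p F).trans hF
  obtain ⟨m, -, rfl⟩ := (Nat.dvd_prime_pow Fact.out).mp (hcard ▸ dvd_pow_self Q hn)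
  rw [← pow_mul] at hcard
  have hmn := Nat.pow_right_injective (Fact.out : p.Prime).two_le hcard
  have hm : m ≠ 0 := by
    rintro rfl
    exact (Module.finrank_pos (R := ZMod p) (M := F)).ne' (by simpa using hmn)
  obtain ⟨φ⟩ : Nonempty (GaloisField p m →ₐ[ZMod p] F) :=
    FiniteField.nonempty_algHom_of_finrank_dvd <| by
      rw [GaloisField.finrank p hm, hmn]
      exact dvd_mul_right m n
  refine ⟨φ.toRingHom.fieldRange, ?_⟩
  rw [← GaloisField.card p m hm]
  exact Nat.card_congr φ.toRingHom.rangeRestrictFieldEquiv.toEquiv.symm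

section AnisotropicForm

variable {K : Type*} [Field K]

theorem eval_dickson_add_five {y : K} (hy : y ^ 2 + y = 1) (n : ℕ) :
    (dickson 1 (1 : K) (n + 5)).eval y = (dickson 1 (1 : K) n).eval y := by
  simp only [dickson_add_two, eval_sub, eval_mul, eval_X, eval_C, one_mul]
  generalize (dickson 1 (1 : K) n).eval y = u, (dickson 1 (1 : K) (n + 1)).eval y = v
  linear_combination (v * (y ^ 2 - y - 1) - u * (y - 1)) * hy

theorem dickson_one_one_pow_char (p m : ℕ) [Fact p.Prime] [CharP K p] :
    dickson 1 (1 : K) (p ^ m) = X ^ p ^ m := by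
  induction m with
  | zero => simp
  | succ m ih => rw [pow_succ, dickson_one_one_mul, dickson_one_one_charP K p, ih, X_pow_comp,
      pow_right_comm, ← pow_mul]

variable [Fintype K]

theorem natCast_ne_zero_of_coprime_card {n : ℕ} (h : n.Coprime (Fintype.card K)) :
    (n : K) ≠ 0 := by
  intro hn
  obtain ⟨p, hchar⟩ := CharP.exists K
  refine (CharP.char_is_prime K p).not_dvd_one (h ▸ Nat.dvd_gcd ?_ ?_)
  · exact (CharP.cast_eq_zero_iff K p n).mp hn
  · exact (CharP.cast_eq_zero_iff K p _).mp (FiniteField.cast_card_eq_zero K)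

theorem five_ne_zero_of_not_dvd_card (h : ¬ 5 ∣ Fintype.card K) : (5 : K) ≠ 0 :=
  mod_cast natCast_ne_zero_of_coprime_card (Nat.prime_five.coprime_iff_not_dvd.mpr h)

theorem sq_add_self_ne_one (hmod : Fintype.card K % 5 = 2 ∨ Fintype.card K % 5 = 3)
    (y : K) : y ^ 2 + y ≠ 1 := by
  -- A root `y` is `ζ + ζ⁻¹` with `ζ ^ 5 = 1`, and the `n`-th Dickson polynomial maps it to
  -- `ζ ^ n + ζ⁻¹ ^ n`; the `card K`-th one therefore swaps the two roots, but is the Frobenius.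
  intro hy
  obtain ⟨p, hchar⟩ := CharP.exists K
  obtain ⟨m, hp, hcard⟩ := FiniteField.card K p
  have : Fact p.Prime := ⟨hp⟩
  have eval_card : (dickson 1 (1 : K) (Fintype.card K)).eval y = y := by
    rw [hcard, dickson_one_one_pow_char, eval_pow, eval_X, ← hcard, FiniteField.pow_card]
  have eval_mod_five : (dickson 1 (1 : K) (Fintype.card K)).eval y =
      (dickson 1 (1 : K) (Fintype.card K % 5)).eval y := by
    have periodic : Periodic (fun n ↦ (dickson 1 (1 : K) n).eval y) 5 :=
      eval_dickson_add_five hy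
    exact (periodic.map_mod_nat _).symm
  have conjugate : y = -1 - y := by
    refine eval_card.symm.trans (eval_mod_five.trans ?_)
    rcases hmod with h | h <;> rw [h]
    · rw [dickson_two]
      simp only [eval_sub, eval_mul, eval_pow, eval_X, eval_C, Nat.cast_one, eval_ofNat, eval_one]
      linear_combination hy
    · rw [dickson_add_two, dickson_two]
      simp only [dickson_one, eval_sub, eval_mul, eval_pow, eval_X, eval_C, Nat.cast_one,
        eval_ofNat, eval_one]
      linear_combination (y - 1) * hy
  refine five_ne_zero_of_not_dvd_card (K := K) (by omega) ?_
  linear_combination (2 * y + 1) * conjugate - 4 * hy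

theorem eq_zero_of_sq_add_mul_sub_sq_eq_zero
    (hmod : Fintype.card K % 5 = 2 ∨ Fintype.card K % 5 = 3) {x y : K}
    (h : x ^ 2 + x * y - y ^ 2 = 0) :
    x = 0 ∧ y = 0 := by
  have hy : y = 0 := by
    by_contra hy
    refine sq_add_self_ne_one hmod (x / y) ?_
    field_simp
    linear_combination h
  subst hy
  simpa using h

theorem bijective_oddQuintic_dickson (hmod : Fintype.card K % 5 = 2 ∨ Fintype.card K % 5 = 3)
    (c : K) : Bijective (oddQuintic (-5 * c) (5 * c ^ 2)) := by
  refine Finite.injective_iff_bijective.mp fun s t hst ↦ ?_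
  have factor : (s - t) * ((s ^ 2 + t ^ 2 - 3 * c) ^ 2 + (s ^ 2 + t ^ 2 - 3 * c) * (s * t + c) -
      (s * t + c) ^ 2) = 0 := by
    rw [oddQuintic, oddQuintic] at hst
    linear_combination hst
  rcases mul_eq_zero.mp factor with h | h
  · exact sub_eq_zero.mp h
  · obtain ⟨hA, hB⟩ := eq_zero_of_sq_add_mul_sub_sq_eq_zero hmod h
    obtain ⟨hsum, rfl⟩ := eq_zero_of_sq_add_mul_sub_sq_eq_zero hmod
      (x := s + t) (y := t) (by linear_combination hA + 3 * hB)
    simpa using hsum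

end AnisotropicForm

section Coeff

variable {R : Type*} [CommRing R] (a b : R)

theorem coeff_unitQuadratic_pow (r n : ℕ) : (unitQuadratic a b ^ r).coeff n =
    ∑ k ∈ Finset.range (n + 1),
      (r.choose k * k.choose (n - k) : R) * a ^ (2 * k - n) * b ^ (n - k) := by
  have quadratic_eq : unitQuadratic a b = X * (C a + C b * X) + 1 := by
    rw [unitQuadratic]; ring
  have coeff_linear_pow (k i : ℕ) :
      ((C a + C b * X) ^ k).coeff i = k.choose i * a ^ (k - i) * b ^ i := by
    have comp_eq : (C a + C b * X) ^ k = ((X + C a) ^ k).comp (C b * X) := by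
      simp [add_comm]
    rw [comp_eq, comp_C_mul_X_coeff, coeff_X_add_C_pow]
    ring
  simp_rw [quadratic_eq, add_pow, one_pow, mul_one, mul_pow, finsetSum_coeff, coeff_mul_natCast,
    coeff_X_pow_mul', coeff_linear_pow, ite_mul, zero_mul, ← Finset.sum_filter]
  refine Finset.sum_subset_zero_on_sdiff (by grind) (fun k hk ↦ ?_) (fun k hk ↦ ?_)
  · rw [Nat.choose_eq_zero_of_lt (by grind)]
    simp
  · rw [show k - (n - k) = 2 * k - n by grind]
    ring

theorem natDegree_unitQuadratic_pow_le (r : ℕ) : (unitQuadratic a b ^ r).natDegree ≤ 2 * r := by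
  have : (unitQuadratic a b).natDegree ≤ 2 := by
    unfold unitQuadratic; compute_degree
  exact natDegree_pow_le_of_le r this |>.trans_eq (mul_comm _ _)

theorem unitQuadratic_zero_pow (r : ℕ) :
    unitQuadratic 0 b ^ r = expand R 2 ((1 + C b * X) ^ r) := by
  simp [unitQuadratic]

theorem coeff_unitQuadratic_zero_pow_of_odd (r : ℕ) {n : ℕ} (hn : Odd n) :
    (unitQuadratic 0 b ^ r).coeff n = 0 := by
  rw [unitQuadratic_zero_pow, coeff_expand two_pos, if_neg hn.not_two_dvd_nat]

theorem coeff_unitQuadratic_zero_pow_two_mul (r n : ℕ) :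
    (unitQuadratic 0 b ^ r).coeff (2 * n) = r.choose n * b ^ n := by
  have comp_eq : (1 + C b * X) ^ r = ((1 + X) ^ r).comp (C b * X) := by simp
  rw [unitQuadratic_zero_pow, coeff_expand_mul' two_pos, comp_eq, comp_C_mul_X_coeff,
    coeff_one_add_X_pow]

theorem coeff_zero_unitQuadratic_pow (r : ℕ) : (unitQuadratic a b ^ r).coeff 0 = 1 := by
  simp [unitQuadratic, coeff_zero_eq_eval_zero]

theorem coeff_one_unitQuadratic_pow (r : ℕ) : (unitQuadratic a b ^ r).coeff 1 = r * a := by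
  simp [coeff_unitQuadratic_pow, Finset.sum_range_succ]

theorem coeff_unitQuadratic_mul (f : R[X]) (n : ℕ) :
    (unitQuadratic a b * f).coeff (n + 2) =
      f.coeff (n + 2) + a * f.coeff (n + 1) + b * f.coeff n := by
  simp only [unitQuadratic, add_mul, one_mul, mul_assoc, coeff_add, coeff_C_mul, coeff_X_mul,
    coeff_X_pow_mul]

theorem coeff_X_mul_derivative (f : R[X]) (n : ℕ) :
    (X * derivative f).coeff n = n * f.coeff n := by
  cases n with
  | zero => simp
  | succ n => rw [coeff_X_mul, coeff_derivative, mul_comm, Nat.cast_succ]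

theorem unitQuadratic_mul_X_mul_derivative_pow (r : ℕ) :
    unitQuadratic a b * (X * derivative (unitQuadratic a b ^ r)) =
      C (r : R) * (C a * (X * unitQuadratic a b ^ r) +
        C (2 * b) * (X ^ 2 * unitQuadratic a b ^ r)) := by
  have derivative_eq : derivative (unitQuadratic a b) = C a + C (2 * b) * X := by
    simp only [unitQuadratic, derivative_add, derivative_one, derivative_C_mul, derivative_X,
      derivative_X_pow, C_mul, Nat.cast_ofNat]
    ring
  cases r with
  | zero => simp
  | succ r =>
    rw [derivative_pow_succ, derivative_eq, pow_succ, ← Nat.cast_succ, C_eq_natCast]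
    ring

theorem coeff_unitQuadratic_pow_add_two (r n : ℕ) :
    (n + 2) * (unitQuadratic a b ^ r).coeff (n + 2) =
      (r - (n + 1)) * a * (unitQuadratic a b ^ r).coeff (n + 1) +
        (2 * r - n) * b * (unitQuadratic a b ^ r).coeff n := by
  have h := congrArg (coeff · (n + 2)) (unitQuadratic_mul_X_mul_derivative_pow a b r)
  simp only [coeff_unitQuadratic_mul, coeff_X_mul_derivative] at h
  simp only [coeff_C_mul, coeff_add, coeff_X_mul, coeff_X_pow_mul, Nat.cast_add, Nat.cast_one,
    Nat.cast_ofNat] at h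
  linear_combination h

theorem coeff_pow_eq_of_modEq {p e : ℕ} [Fact p.Prime] [CharP R p] {f : R[X]} (hf : f.coeff 0 = 1)
    {r s j : ℕ} (hrs : r ≡ s [MOD p ^ e]) (hj : j < p ^ e) :
    (f ^ r).coeff j = (f ^ s).coeff j := by
  have X_dvd : X ∣ f - 1 := X_dvd_iff.mpr (by simp [hf])
  have X_pow_dvd : X ^ p ^ e ∣ f ^ p ^ e - 1 := by
    simpa [sub_pow_char_pow] using pow_dvd_pow_of_dvd X_dvd (p ^ e)
  have coeff_mod (n : ℕ) : (f ^ n).coeff j = (f ^ (n % p ^ e)).coeff j := by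
    have hdvd : X ^ p ^ e ∣ f ^ n - f ^ (n % p ^ e) := by
      nth_rw 1 [← Nat.mod_add_div n (p ^ e)]
      rw [pow_add, pow_mul, ← mul_sub_one]
      exact (X_pow_dvd.trans (sub_one_dvd_pow_sub_one _ _)).mul_left _
    exact sub_eq_zero.mp (coeff_sub (R := R) _ _ _ ▸ X_pow_dvd_iff.mp hdvd j hj)
  rw [coeff_mod r, coeff_mod s, hrs]

theorem coeff_unitQuadratic_pow_eq_of_modEq {p e q r s j : ℕ} [Fact p.Prime] [CharP R p]
    (hp5 : p ≠ 5) (hq : p ^ e ∣ q) (hr : 5 * r + 1 = q + 2 * j)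
    (hs : 5 * s + 1 ≡ 2 * j [MOD p ^ e]) (hj : j < p ^ e) :
    (unitQuadratic a b ^ r).coeff j = (unitQuadratic a b ^ s).coeff j := by
  have hrs : 5 * r + 1 ≡ 5 * s + 1 [MOD p ^ e] := by
    rw [hr]
    simpa using (Nat.modEq_zero_iff_dvd.mpr hq).add hs.symm
  have coprime : (p ^ e).gcd 5 = 1 :=
    Nat.Coprime.pow_left e ((Nat.coprime_primes Fact.out Nat.prime_five).mpr hp5)
  refine coeff_pow_eq_of_modEq (by simp [unitQuadratic]) ?_ hj
  exact (hrs.add_right_cancel' 1).cancel_left_of_coprime coprime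

theorem unitQuadratic_pow_char (p : ℕ) [Fact p.Prime] [CharP R p] :
    unitQuadratic a b ^ p = expand R p (unitQuadratic (a ^ p) (b ^ p)) := by
  simp [unitQuadratic, add_pow_char, mul_pow, pow_right_comm]

theorem coeff_unitQuadratic_pow_add_char_mul {p : ℕ} [Fact p.Prime] [CharP R p] {s j : ℕ}
    (hj : j < p) (hs : 2 * s < p + j) (m : ℕ) :
    (unitQuadratic a b ^ (s + p * m)).coeff (p + j) =
      m * a ^ p * (unitQuadratic a b ^ s).coeff j := by
  have hp : 0 < p := (Fact.out : p.Prime).pos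
  rw [pow_add, pow_mul, unitQuadratic_pow_char a b p, ← map_pow, coeff_mul,
    Finset.sum_eq_single_of_mem (j, p) (by simp [add_comm])]
  · rw [coeff_expand hp, if_pos dvd_rfl, Nat.div_self hp,
      coeff_one_unitQuadratic_pow, mul_comm]
  · rintro ⟨i, k⟩ hik hne
    rw [Finset.HasAntidiagonal.mem_antidiagonal] at hik
    rw [coeff_expand hp]
    split_ifs with hpk
    · obtain ⟨_ | _ | k, rfl⟩ := hpk
      · rw [coeff_eq_zero_of_natDegree_lt ((natDegree_unitQuadratic_pow_le a b s).trans_lt _),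
          zero_mul]
        omega
      · refine absurd ?_ hne
        ext <;> grind
      · have : p * 2 ≤ p * (k + 1 + 1) := by gcongr; omega
        omega
    · rw [mul_zero]

/-- The value `5 ^ n * n! * (unitQuadratic a b ^ r).coeff n`, written without division in terms of
`s = 5 * r` and `β = 5 * b`. It makes sense for any `s` in `R`, so that in a field with `q`
elements only `5 * r ≡ 2 * j - 1` modulo `q` matters when `5 * r = q - 1 + 2 * j`. -/
def scaledCoeff (s a β : R) : ℕ → R
  | 0 => 1
  | 1 => s * a
  | n + 2 => (s - 5 * (n + 1)) * a * scaledCoeff s a β (n + 1) +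
      (n + 1) * (2 * s - 5 * n) * β * scaledCoeff s a β n

open Nat in
theorem scaledCoeff_eq (r : ℕ) : ∀ n : ℕ, scaledCoeff (5 * (r : R)) a (5 * b) n =
    5 ^ n * n ! * (unitQuadratic a b ^ r).coeff n
  | 0 => by simp [scaledCoeff, coeff_zero_unitQuadratic_pow]
  | 1 => by simp [scaledCoeff, coeff_one_unitQuadratic_pow]; ring
  | n + 2 => by
    rw [scaledCoeff, scaledCoeff_eq r n, scaledCoeff_eq r (n + 1)]
    simp only [Nat.factorial_succ]
    push_cast
    linear_combination (-5 ^ (n + 2) * (n + 1) * n ! : R) * coeff_unitQuadratic_pow_add_two a b r n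

end Coeff

section Hermite

variable {K : Type*} [Field K]

theorem sum_units_eq_sum_of_map_zero [Fintype K] [DecidableEq K] {M : Type*} [AddCommMonoid M]
    {f : K → M} (hf : f 0 = 0) :
    ∑ u : Kˣ, f u = ∑ x, f x := by
  refine Fintype.sum_of_injective Units.val Units.val_injective _ _ (fun x hx ↦ ?_) fun _ ↦ rfl
  rw [not_ne_iff.mp fun h ↦ hx ⟨Units.mk0 x h, rfl⟩, hf]

theorem oddQuintic_pow_eq_sum (a b : K) (u : Kˣ) (r : ℕ) :
    oddQuintic a b u ^ r = ∑ i ∈ Finset.range (2 * r + 1),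
      (unitQuadratic a b ^ r).coeff i * (u : K) ^ (5 * r - 2 * i) := by
  have factor : oddQuintic a b u = u ^ 5 * (unitQuadratic a b).eval ((u : K)⁻¹ ^ 2) := by
    simp only [oddQuintic, unitQuadratic, eval_add, eval_one, eval_mul, eval_C, eval_pow, eval_X]
    field_simp
  rw [factor, mul_pow, ← eval_pow,
    eval_eq_sum_range' (Nat.lt_succ_of_le (natDegree_unitQuadratic_pow_le a b r)), Finset.mul_sum]
  refine Finset.sum_congr rfl fun i hi ↦ ?_
  have hi' : 2 * i ≤ 5 * r := by grind
  rw [pow_sub₀ _ u.ne_zero hi']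
  ring

variable [Fintype K]

theorem sum_coeff_unitQuadratic_pow_eq_zero {a b : K} (h : Bijective (oddQuintic a b)) {r : ℕ}
    (hr0 : 0 < r) (hr : r < Fintype.card K - 1) :
    ∑ i ∈ Finset.range (2 * r + 1) with Fintype.card K - 1 ∣ 5 * r - 2 * i,
      (unitQuadratic a b ^ r).coeff i = 0 := by
  classical
  have power_sum : ∑ u : Kˣ, oddQuintic a b u ^ r = 0 :=
    calc ∑ u : Kˣ, oddQuintic a b u ^ r
        = ∑ x, oddQuintic a b x ^ r :=
          sum_units_eq_sum_of_map_zero (f := (oddQuintic a b · ^ r)) (by simp [oddQuintic, hr0.ne'])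
      _ = ∑ x : K, x ^ r := h.sum_comp (· ^ r)
      _ = 0 := FiniteField.sum_pow_lt_card_sub_one K r hr
  simp_rw [oddQuintic_pow_eq_sum] at power_sum
  rw [Finset.sum_comm] at power_sum
  simp_rw [← Finset.mul_sum, FiniteField.sum_pow_units, mul_ite, mul_neg_one, mul_zero,
    ← Finset.sum_filter, Finset.sum_neg_distrib] at power_sum
  exact neg_eq_zero.mp power_sum

theorem coeff_unitQuadratic_pow_eq_zero {a b : K} (h : Bijective (oddQuintic a b)) {r j : ℕ}
    (hr : 5 * r = Fintype.card K - 1 + 2 * j) (hj : 2 * j < Fintype.card K - 1) :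
    (unitQuadratic a b ^ r).coeff j = 0 := by
  have hsum := sum_coeff_unitQuadratic_pow_eq_zero h (r := r) (by omega) (by omega)
  rwa [Finset.sum_eq_single_of_mem j] at hsum
  · rw [Finset.mem_filter, Finset.mem_range]
    exact ⟨by omega, 1, by omega⟩
  · intro i hi hij
    rw [Finset.mem_filter, Finset.mem_range] at hi
    obtain ⟨hi, k, hk⟩ := hi
    rcases k with _ | _ | k
    · omega
    · omega
    · have : (Fintype.card K - 1) * 2 ≤ (Fintype.card K - 1) * (k + 1 + 1) := by gcongr; omega
      omega

-- For `a = 0` only even indices contribute, and modulo `4` these exclude exponents equal to twice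
-- `card K - 1`, so the range allowed for `j` doubles; `card K = 27` needs this.
theorem coeff_unitQuadratic_zero_pow_eq_zero {b : K} (h : Bijective (oddQuintic 0 b))
    (hcard : Fintype.card K % 4 = 3) {r j : ℕ} (hj : Even j)
    (hr : 5 * r = Fintype.card K - 1 + 2 * j) (hjlt : j < Fintype.card K - 1) :
    (unitQuadratic 0 b ^ r).coeff j = 0 := by
  have hsum := sum_coeff_unitQuadratic_pow_eq_zero h (r := r) (by omega) (by omega)
  rwa [Finset.sum_eq_single_of_mem j] at hsum
  · rw [Finset.mem_filter, Finset.mem_range]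
    exact ⟨by omega, 1, by omega⟩
  · intro i hi hij
    rw [Finset.mem_filter, Finset.mem_range] at hi
    obtain ⟨hi, k, hk⟩ := hi
    refine coeff_unitQuadratic_zero_pow_of_odd b r (Nat.not_even_iff_odd.mp fun heven ↦ ?_)
    rw [even_iff_exists_two_mul] at hj heven
    rcases k with _ | _ | _ | k
    · omega
    · omega
    · omega
    · have : (Fintype.card K - 1) * 3 ≤ (Fintype.card K - 1) * (k + 1 + 1 + 1) := by
        gcongr
        omega
      omega

theorem scaledCoeff_eq_zero {a b : K} (h : Bijective (oddQuintic a b)) {j : ℕ}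
    (h5 : 5 ∣ Fintype.card K - 1 + 2 * j) (hj : 2 * j < Fintype.card K - 1) :
    scaledCoeff (2 * (j : K) - 1) a (5 * b) j = 0 := by
  obtain ⟨r, hr⟩ := h5
  have cast_eq : (5 * r : K) = 2 * j - 1 := by
    have hcast : ((Fintype.card K + 2 * j : ℕ) : K) = (5 * r + 1 : ℕ) := by
      rw [show Fintype.card K + 2 * j = 5 * r + 1 by omega]
    push_cast at hcast
    rw [FiniteField.cast_card_eq_zero] at hcast
    linear_combination -hcast
  rw [← cast_eq, scaledCoeff_eq, coeff_unitQuadratic_pow_eq_zero h hr.symm hj, mul_zero]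

theorem pow_succ_dvd_card_of_pow_lt {p e : ℕ} [CharP K p] (h : p ^ e < Fintype.card K) :
    p ^ (e + 1) ∣ Fintype.card K := by
  obtain ⟨m, hp, hcard⟩ := FiniteField.card K p
  rw [hcard] at h ⊢
  exact pow_dvd_pow p ((Nat.pow_lt_pow_iff_right hp.one_lt).mp h)

theorem coeff_unitQuadratic_pow_eq_zero_of_modEq {p e : ℕ} [Fact p.Prime] [CharP K p] {a b : K}
    (h : Bijective (oddQuintic a b)) {s j : ℕ} (hp5 : p ≠ 5)
    (hcard : p ^ e ∣ Fintype.card K) (hs : 5 * s + 1 ≡ 2 * j [MOD p ^ e]) (hj : j < p ^ e)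
    (h5 : 5 ∣ Fintype.card K - 1 + 2 * j) (hlt : 2 * j < Fintype.card K - 1) :
    (unitQuadratic a b ^ s).coeff j = 0 := by
  obtain ⟨r, hr⟩ := h5
  rw [← coeff_unitQuadratic_pow_eq_of_modEq a b hp5 hcard (r := r) (by omega) hs hj]
  exact coeff_unitQuadratic_pow_eq_zero h hr.symm hlt

end Hermite

section Necessity

variable {K : Type*} [Field K] [Fintype K]

theorem card_mod_four_eq_three_of_char_three [CharP K 3] (hmod : Fintype.card K % 5 = 2) :
    Fintype.card K % 4 = 3 := by
  obtain ⟨m, -, hm⟩ := FiniteField.card K 3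
  have three_pow_mod (n : ℕ) : 3 ^ n % 20 ∈ ({1, 3, 9, 7} : Finset ℕ) := by
    induction n with
    | zero => simp
    | succ n ih => grind
  have := three_pow_mod m
  grind

variable {a b : K}

theorem sq_eq_five_mul_of_card_mod_five_eq_two (h : Bijective (oddQuintic a b))
    (hcard : 13 < Fintype.card K) (h2 : (2 : K) ≠ 0) (h3 : (3 : K) ≠ 0)
    (hmod : Fintype.card K % 5 = 2) : a ^ 2 = 5 * b := by
  have hcoeff := scaledCoeff_eq_zero h (j := 2) (by omega) (by omega)
  simp only [scaledCoeff] at hcoeff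
  refine mul_left_cancel₀ (mul_ne_zero h2 h3) ?_
  push_cast at hcoeff
  linear_combination -hcoeff

theorem sq_sub_mul_two_mul_sq_sub_eq_zero (h : Bijective (oddQuintic a b))
    (hcard : 13 < Fintype.card K) (h2 : (2 : K) ≠ 0) (h3 : (3 : K) ≠ 0) (h7 : (7 : K) ≠ 0)
    (hmod : Fintype.card K % 5 = 3) : (a ^ 2 - 5 * b) * (2 * a ^ 2 - 5 * b) = 0 := by
  have hcoeff := scaledCoeff_eq_zero h (j := 4) (by omega) (by omega)
  simp only [scaledCoeff] at hcoeff
  refine (mul_eq_zero_iff_left (mul_ne_zero (mul_ne_zero (pow_ne_zero 3 h2) h3) h7)).mp ?_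
  push_cast at hcoeff
  linear_combination hcoeff

theorem two_mul_sq_ne_of_seventeen_ne_zero (h : Bijective (oddQuintic a b))
    (hcard : 13 < Fintype.card K) (hb : b ≠ 0) (h2 : (2 : K) ≠ 0) (h3 : (3 : K) ≠ 0)
    (h5 : (5 : K) ≠ 0) (h7 : (7 : K) ≠ 0) (h17 : (17 : K) ≠ 0) (hmod : Fintype.card K % 5 = 3) :
    2 * a ^ 2 ≠ 5 * b := by
  intro hab
  have ha : a ≠ 0 := by
    rintro rfl
    simp_all
  have hcard18 : Fintype.card K ≠ 18 := fun h18 ↦ by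
    have h18 : (18 : K) = 0 := by simpa [h18] using FiniteField.cast_card_eq_zero K
    refine mul_ne_zero h2 (pow_ne_zero 2 h3) ?_
    linear_combination h18
  have hcoeff := scaledCoeff_eq_zero h (j := 9) (by omega) (by omega)
  rw [← hab] at hcoeff
  simp only [scaledCoeff] at hcoeff
  have factor : (2 ^ 7 * 3 ^ 4 * 5 * 7 * 17 : K) * a ^ 9 = 0 := by
    push_cast at hcoeff
    linear_combination hcoeff
  simp_all

theorem two_mul_sq_ne_of_char_seventeen [CharP K 17] (h : Bijective (oddQuintic a b))
    (hcard : 13 < Fintype.card K) (hb : b ≠ 0) (hmod : Fintype.card K % 5 = 3) :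
    2 * a ^ 2 ≠ 5 * b := by
  intro hab
  have : Fact (Nat.Prime 17) := ⟨by norm_num⟩
  have h17 : (17 : K) = 0 := CharP.ofNat_eq_zero K 17
  have hdvd : 17 ^ 2 ∣ Fintype.card K := by
    have : 17 ^ 1 ∣ Fintype.card K := pow_succ_dvd_card_of_pow_lt (by omega)
    exact pow_succ_dvd_card_of_pow_lt (by omega)
  have hcoeff := coeff_unitQuadratic_pow_eq_zero_of_modEq h (s := 4 + 17 * 7) (j := 17 + 2)
    (by norm_num) hdvd (by decide) (by norm_num) (by omega) (by omega)
  rw [coeff_unitQuadratic_pow_add_char_mul _ _ (by norm_num) (by norm_num)] at hcoeff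
  have coeff_two : (unitQuadratic a b ^ 4).coeff 2 = 6 * a ^ 2 + 4 * b := by
    simp [coeff_unitQuadratic_pow, Finset.sum_range_succ, Nat.choose, add_comm]
  rw [coeff_two] at hcoeff
  have hb_eq : b = -3 * a ^ 2 := by linear_combination -7 * hab + (a ^ 2 - 2 * b) * h17
  have ha : a ^ 19 = 0 := by
    push_cast [hb_eq] at hcoeff
    linear_combination 2 * hcoeff + 5 * a ^ 19 * h17
  simp_all

theorem sq_eq_five_mul_of_char_seven [CharP K 7] (h : Bijective (oddQuintic a b))
    (hcard : 13 < Fintype.card K) (hb : b ≠ 0) (hmod : Fintype.card K % 5 = 3) :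
    a ^ 2 = 5 * b := by
  have : Fact (Nat.Prime 7) := ⟨by norm_num⟩
  have h7 : (7 : K) = 0 := CharP.ofNat_eq_zero K 7
  have hdvd : 7 ^ 2 ∣ Fintype.card K := pow_succ_dvd_card_of_pow_lt (by omega)
  have ha : a ≠ 0 := by
    rintro rfl
    have hcoeff := coeff_unitQuadratic_pow_eq_zero_of_modEq h (s := 25) (j := 2 * 7)
      (by norm_num) hdvd (by decide) (by norm_num) (by omega) (by omega)
    rw [coeff_unitQuadratic_zero_pow_two_mul] at hcoeff
    have hchoose : (Nat.choose 25 7 : K) ≠ 0 :=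
      (CharP.cast_eq_zero_iff K 7 _).not.mpr (by norm_num [Nat.choose])
    exact mul_ne_zero hchoose (pow_ne_zero 7 hb) hcoeff
  have hcoeff := coeff_unitQuadratic_pow_eq_zero_of_modEq h (s := 2 + 7 * 3) (j := 7 + 2)
    (by norm_num) hdvd (by decide) (by norm_num) (by omega) (by omega)
  rw [coeff_unitQuadratic_pow_add_char_mul _ _ (by norm_num) (by norm_num)] at hcoeff
  have coeff_two : (unitQuadratic a b ^ 2).coeff 2 = a ^ 2 + 2 * b := by
    simp [coeff_unitQuadratic_pow, Finset.sum_range_succ, Nat.choose, add_comm]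
  rw [coeff_two] at hcoeff
  refine mul_left_cancel₀ (pow_ne_zero 7 ha) ?_
  push_cast at hcoeff
  linear_combination -2 * hcoeff + (a ^ 9 + a ^ 7 * b) * h7

theorem sq_eq_five_mul_of_char_two [CharP K 2] (h : Bijective (oddQuintic a b))
    (hcard : 13 < Fintype.card K) (hb : b ≠ 0)
    (hmod : Fintype.card K % 5 = 2 ∨ Fintype.card K % 5 = 3) : a ^ 2 = 5 * b := by
  have h2 : (2 : K) = 0 := CharP.ofNat_eq_zero K 2
  rcases hmod with hmod | hmod
  · have hdvd : 2 ^ 2 ∣ Fintype.card K := pow_succ_dvd_card_of_pow_lt (by omega)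
    have hcoeff : 3 * b + 3 * a ^ 2 = 0 := by
      simpa [coeff_unitQuadratic_pow, Finset.sum_range_succ, Nat.choose] using
        coeff_unitQuadratic_pow_eq_zero_of_modEq h (s := 3) (j := 2)
          (by norm_num) hdvd (by decide) (by norm_num) (by omega) (by omega)
    linear_combination hcoeff - (a ^ 2 + 4 * b) * h2
  · have hdvd : 2 ^ 3 ∣ Fintype.card K := pow_succ_dvd_card_of_pow_lt (by omega)
    have hcoeff : 3 * b ^ 2 + 3 * a ^ 2 * b = 0 := by
      simpa [coeff_unitQuadratic_pow, Finset.sum_range_succ, Nat.choose] using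
        coeff_unitQuadratic_pow_eq_zero_of_modEq h (s := 3) (j := 4)
          (by norm_num) hdvd (by decide) (by norm_num) (by omega) (by omega)
    refine mul_left_cancel₀ hb ?_
    linear_combination hcoeff - (a ^ 2 * b + 4 * b ^ 2) * h2

theorem ne_zero_of_char_three_of_card_mod_five_eq_two [CharP K 3] (h : Bijective (oddQuintic a b))
    (hcard : 13 < Fintype.card K) (hb : b ≠ 0) (hmod : Fintype.card K % 5 = 2) : a ≠ 0 := by
  rintro rfl
  have hdvd : 3 ^ 3 ∣ Fintype.card K := pow_succ_dvd_card_of_pow_lt (by omega)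
  obtain ⟨r, hr⟩ : 5 ∣ Fintype.card K - 1 + 2 * (2 * 11) := by omega
  have hcoeff := coeff_unitQuadratic_zero_pow_eq_zero h (card_mod_four_eq_three_of_char_three hmod)
    (even_two_mul 11) hr.symm (by omega)
  rw [coeff_unitQuadratic_pow_eq_of_modEq 0 b (p := 3) (s := 14) (by norm_num) hdvd (by omega)
    (by decide) (by norm_num), coeff_unitQuadratic_zero_pow_two_mul] at hcoeff
  have hchoose : (Nat.choose 14 11 : K) ≠ 0 :=
    (CharP.cast_eq_zero_iff K 3 _).not.mpr (by norm_num [Nat.choose])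
  exact mul_ne_zero hchoose (pow_ne_zero 11 hb) hcoeff

theorem sq_eq_five_mul_of_char_three_of_card_mod_five_eq_two [CharP K 3]
    (h : Bijective (oddQuintic a b)) (hcard : 13 < Fintype.card K) (hb : b ≠ 0)
    (hmod : Fintype.card K % 5 = 2) : a ^ 2 = 5 * b := by
  have h3 : (3 : K) = 0 := CharP.ofNat_eq_zero K 3
  have hdvd : 3 ^ 3 ∣ Fintype.card K := pow_succ_dvd_card_of_pow_lt (by omega)
  have hcoeff :
      70 * 4 * a * b ^ 3 + 56 * 10 * a ^ 3 * b ^ 2 + 28 * 6 * a ^ 5 * b + 8 * a ^ 7 = 0 := by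
    simpa [coeff_unitQuadratic_pow, Finset.sum_range_succ, Nat.choose] using
      coeff_unitQuadratic_pow_eq_zero_of_modEq h (s := 8) (j := 7)
        (by norm_num) hdvd (by decide) (by norm_num) (by omega) (by omega)
  have factor : a * ((a ^ 2 + b) * ((a ^ 2 + b) ^ 2 + b ^ 2)) = 0 := by
    linear_combination (norm := (ring_nf; reduce_mod_char!)) 2 * hcoeff
  have sum_sq_ne : (a ^ 2 + b) ^ 2 + b ^ 2 ≠ 0 := fun hsq ↦ by
    refine FiniteField.isSquare_neg_one_iff.mp ⟨(a ^ 2 + b) / b, ?_⟩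
      (card_mod_four_eq_three_of_char_three hmod)
    field_simp
    linear_combination -hsq
  have hsum : a ^ 2 + b = 0 := by
    simpa [ne_zero_of_char_three_of_card_mod_five_eq_two h hcard hb hmod, sum_sq_ne] using factor
  linear_combination hsum - 2 * b * h3

theorem sq_eq_five_mul_of_char_three_of_card_mod_five_eq_three [CharP K 3]
    (h : Bijective (oddQuintic a b)) (hcard : 13 < Fintype.card K) (hb : b ≠ 0)
    (hmod : Fintype.card K % 5 = 3) : a ^ 2 = 5 * b := by
  have h3 : (3 : K) = 0 := CharP.ofNat_eq_zero K 3
  have ha : a ≠ 0 := by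
    rintro rfl
    have hdvd : 3 ^ 2 ∣ Fintype.card K := pow_succ_dvd_card_of_pow_lt (by omega)
    have hcoeff := coeff_unitQuadratic_pow_eq_zero_of_modEq h (s := 5) (j := 2 * 2)
      (by norm_num) hdvd (by decide) (by norm_num) (by omega) (by omega)
    rw [coeff_unitQuadratic_zero_pow_two_mul] at hcoeff
    have hchoose : (Nat.choose 5 2 : K) ≠ 0 :=
      (CharP.cast_eq_zero_iff K 3 _).not.mpr (by norm_num [Nat.choose])
    exact mul_ne_zero hchoose (pow_ne_zero 2 hb) hcoeff
  have hdvd : 3 ^ 3 ∣ Fintype.card K := pow_succ_dvd_card_of_pow_lt (by omega)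
  have hcoeff :
      53130 * 5 * a * b ^ 4 + 177100 * 20 * a ^ 3 * b ^ 3 + 480700 * 21 * a ^ 5 * b ^ 2 +
        1081575 * 8 * a ^ 7 * b + 2042975 * a ^ 9 = 0 := by
    simpa [coeff_unitQuadratic_pow, Finset.sum_range_succ, Nat.choose] using
      coeff_unitQuadratic_pow_eq_zero_of_modEq h (s := 25) (j := 9)
        (by norm_num) hdvd (by decide) (by norm_num) (by omega) (by omega)
  have factor : a ^ 3 * (a ^ 2 + b) ^ 3 = 0 := by
    linear_combination (norm := (ring_nf; reduce_mod_char!)) 2 * hcoeff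
  have hsum : a ^ 2 + b = 0 := by simpa [ha] using factor
  linear_combination hsum - 2 * b * h3

theorem sq_eq_five_mul_of_bijective_oddQuintic (h : Bijective (oddQuintic a b))
    (hcard : 13 < Fintype.card K) (hb : b ≠ 0)
    (hmod : Fintype.card K % 5 = 2 ∨ Fintype.card K % 5 = 3) : a ^ 2 = 5 * b := by
  obtain ⟨p, hchar⟩ := CharP.exists K
  have cast_ne_zero {n : ℕ} (hn : n.Prime) (hpn : p ≠ n) : (n : K) ≠ 0 :=
    CharP.cast_ne_zero_of_ne_of_prime K hn hpn
  obtain rfl | hp2 := eq_or_ne p 2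
  · exact sq_eq_five_mul_of_char_two h hcard hb hmod
  have h2 : (2 : K) ≠ 0 := mod_cast cast_ne_zero Nat.prime_two hp2
  rcases hmod with hmod | hmod
  · obtain rfl | hp3 := eq_or_ne p 3
    · exact sq_eq_five_mul_of_char_three_of_card_mod_five_eq_two h hcard hb hmod
    · exact sq_eq_five_mul_of_card_mod_five_eq_two h hcard h2
        (mod_cast cast_ne_zero Nat.prime_three hp3) hmod
  · obtain rfl | hp3 := eq_or_ne p 3
    · exact sq_eq_five_mul_of_char_three_of_card_mod_five_eq_three h hcard hb hmod
    have h3 : (3 : K) ≠ 0 := mod_cast cast_ne_zero Nat.prime_three hp3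
    obtain rfl | hp7 := eq_or_ne p 7
    · exact sq_eq_five_mul_of_char_seven h hcard hb hmod
    have h7 : (7 : K) ≠ 0 := mod_cast cast_ne_zero (n := 7) (by norm_num) hp7
    have two_mul_sq_ne : 2 * a ^ 2 ≠ 5 * b := by
      obtain rfl | hp17 := eq_or_ne p 17
      · exact two_mul_sq_ne_of_char_seventeen h hcard hb hmod
      · exact two_mul_sq_ne_of_seventeen_ne_zero h hcard hb h2 h3
          (five_ne_zero_of_not_dvd_card (by omega)) h7
          (mod_cast cast_ne_zero (n := 17) (by norm_num) hp17) hmod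
    have hmul := sq_sub_mul_two_mul_sq_sub_eq_zero h hcard h2 h3 h7 hmod
    exact sub_eq_zero.mp ((mul_eq_zero_iff_right (sub_ne_zero.mpr two_mul_sq_ne)).mp hmul)

end Necessity

theorem bijective_oddQuintic_iff {K : Type*} [Field K] [Fintype K] {a b : K}
    (hmod : Fintype.card K % 5 = 2 ∨ Fintype.card K % 5 = 3) (hcard : 13 < Fintype.card K)
    (hb : b ≠ 0) : Bijective (oddQuintic a b) ↔ a ^ 2 = 5 * b := by
  refine ⟨fun h ↦ sq_eq_five_mul_of_bijective_oddQuintic h hcard hb hmod, fun hab ↦ ?_⟩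
  have h5 : (5 : K) ≠ 0 := five_ne_zero_of_not_dvd_card (by omega)
  convert bijective_oddQuintic_dickson hmod (-a / 5) using 2
  · field_simp
  · field_simp
    linear_combination -hab

theorem stmt_14 (Q : ℕ) (hQ5 : Q % 5 = 2 ∨ Q % 5 = 3) (hQ : 13 < Q)
    (F : Type*) [Field F] [Fintype F] (hF : Fintype.card F = Q ^ 2)
    (α : F) (hα : α ≠ 0) :
    Function.Bijective (fun x : F => x ^ (2 * Q + 3) + α * x) ↔
      α ^ (2 * Q - 2) - 3 * α ^ (Q - 1) + 1 = 0 := by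
  rw [← Nat.card_eq_fintype_card] at hF
  obtain ⟨K, rfl⟩ := exists_subfield_natCard_eq two_ne_zero hF
  have := Fintype.ofFinite K
  have hrank : Module.finrank K F = 2 :=
    Nat.pow_right_injective (by omega) (Module.natCard_eq_pow_finrank.symm.trans hF)
  have hnorm : Algebra.norm K α ≠ 0 := Algebra.norm_ne_zero_iff.mpr hα
  rw [bijective_pow_add_mul_iff_oddQuintic hrank, ← trace_sq_eq_five_mul_norm_iff hrank hα]
  rw [Nat.card_eq_fintype_card] at hQ5 hQ
  exact bijective_oddQuintic_iff hQ5 hQ hnorm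
end

section
/- Let Q = 5^n with Q > 5, and α ∈ F_{Q^2}^*. Then x^(2Q+3) + α·x permutes F_{Q^2} if and only if α^(Q−1) = −1 or α^((Q−1)/2) = −1. -/
/-!
Let `K` be the subfield of order `Q`, and let `T`, `N` be the trace and norm of `α` over `K`. On
`F` the polynomial is `x * (norm x ^ 2 + α)`, and since the norm is surjective onto `K` this is
injective iff the quintic `t * norm (t ^ 2 + α) = t ^ 5 + T * t ^ 3 + N * t` is injective on `K`.

In characteristic `5`, after the substitution `d = x - y`, `s = x + y`, the difference of two values
of the quintic is `d * (d ^ 4 - T * d ^ 2 + N - 3 * T * s ^ 2)`. If `T = 0`, then `N = -α ^ 2`, and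
`d ^ 4 = α ^ 2` has no solution in `K` because `α ∉ K`. If `T ≠ 0`, injectivity says that
`f (d ^ 2)` is a nonsquare for all `d ≠ 0`, where `f = 3 * T * (X ^ 2 - T * X + N)`. By Euler's
criterion `X ^ m - 1` divides `f ^ m + 1`, with `m = (Q - 1) / 2`. As `m ≡ 2` modulo `5`,
the relevant coefficients of `f ^ m` are those of `f ^ 2` up to factors, and the divisibility in
degrees `1` and `2` forces the discriminant `T ^ 2 - 4 * N` to vanish, that is, `α ∈ K`.
-/

open Polynomial

section Polynomial

theorem coeff_mul_expand_add {R : Type*} [CommSemiring R] {p : R[X]} {r i : ℕ}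
    (hp : p.natDegree < r) (hi : i < r) (f : R[X]) (k : ℕ) :
    (p * expand R r f).coeff (r * k + i) = p.coeff i * f.coeff k := by
  induction f using Polynomial.induction_on' with
  | add f g hf hg => rw [map_add, mul_add, coeff_add, hf, hg, coeff_add, mul_add]
  | monomial n a =>
    rw [expand_monomial, ← C_mul_X_pow_eq_monomial, ← mul_assoc, coeff_mul_X_pow', coeff_mul_C,
      coeff_monomial]
    rcases lt_trichotomy n k with h | rfl | h
    · have : (n + 1) * r ≤ k * r := Nat.mul_le_mul_right r h
      rw [if_pos (by lia), coeff_eq_zero_of_natDegree_lt (by lia), if_neg h.ne, mul_zero, zero_mul]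
    · rw [if_pos (by lia), if_pos rfl, mul_comm r n, Nat.add_sub_cancel_left]
    · have : (k + 1) * r ≤ n * r := Nat.mul_le_mul_right r h
      rw [if_neg (by lia), if_neg h.ne', mul_zero]

theorem coeff_mul_pow_char_add {R : Type*} [CommSemiring R] {p : ℕ} [ExpChar R p] {g : R[X]} {i : ℕ}
    (hg : g.natDegree < p) (hi : i < p) (f : R[X]) (k : ℕ) :
    (g * f ^ p).coeff (p * k + i) = g.coeff i * f.coeff k ^ p := by
  rw [← map_frobenius_expand, map_expand, coeff_mul_expand_add hg hi, coeff_map, frobenius_def]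

theorem coeff_add_coeff_eq_zero_of_X_pow_sub_one_dvd {R : Type*} [CommRing R] {f : R[X]} {m i : ℕ}
    (hdvd : X ^ m - 1 ∣ f) (hf : f.natDegree ≤ 2 * m) (hi : 0 < i) (him : i < m) :
    f.coeff i + f.coeff (i + m) = 0 := by
  nontriviality R
  obtain ⟨w, rfl⟩ := hdvd
  have hw : w.natDegree ≤ m := by
    rcases eq_or_ne w 0 with rfl | hw0
    · simp
    · have hm : (X ^ m - 1 : R[X]).Monic := monic_X_pow_sub_C 1 (by lia)
      have hmdeg : (X ^ m - 1 : R[X]).natDegree = m := natDegree_X_pow_sub_C (r := 1)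
      rw [hm.natDegree_mul' hw0, hmdeg] at hf
      lia
  rw [sub_mul, one_mul, coeff_sub, coeff_sub, coeff_X_pow_mul, coeff_X_pow_mul',
    if_neg him.not_ge, coeff_eq_zero_of_natDegree_lt (by lia : w.natDegree < i + m)]
  ring

theorem X_pow_card_subgroup_sub_one_dvd {K : Type*} [Field K] (G : Subgroup Kˣ) [Finite G]
    {f : K[X]} (hf : ∀ g ∈ G, f.eval (g : K) = 0) : X ^ Nat.card G - 1 ∣ f := by
  have := Fintype.ofFinite G
  rw [Nat.card_eq_fintype_card, ← Lagrange.nodal_subgroup_eq_X_pow_card_sub_one]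
  refine Finset.prod_dvd_of_coprime
    ((pairwise_coprime_X_sub_C Units.val_injective).set_pairwise _) fun g hg ↦ ?_
  exact dvd_iff_isRoot.2 (hf g (by simpa using hg))

end Polynomial

section FiniteField

variable {K : Type*} [Field K] [Finite K]

theorem natCard_mod_two_of_ringChar_ne_two (hK : ringChar K ≠ 2) : Nat.card K % 2 = 1 := by
  have := Fintype.ofFinite K
  rw [Nat.card_eq_fintype_card]
  exact FiniteField.odd_card_of_char_ne_two hK

theorem X_pow_card_div_two_sub_one_dvd (hK : ringChar K ≠ 2) {f : K[X]}
    (hf : ∀ d : K, d ≠ 0 → f.eval (d ^ 2) = 0) : X ^ (Nat.card K / 2) - 1 ∣ f := by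
  have hodd := natCard_mod_two_of_ringChar_ne_two hK
  have hcard : Nat.card (powMonoidHom 2 : Kˣ →* Kˣ).range = Nat.card K / 2 := by
    rw [IsCyclic.card_powMonoidHom_range, Nat.card_units, Nat.gcd_eq_right (by lia)]
    lia
  rw [← hcard]
  refine X_pow_card_subgroup_sub_one_dvd _ ?_
  rintro _ ⟨d, rfl⟩
  simpa using hf d d.ne_zero

theorem pow_card_div_two_eq_neg_one_iff (hK : ringChar K ≠ 2) {a : K} :
    a ^ (Nat.card K / 2) = -1 ↔ ¬IsSquare a := by
  have := Fintype.ofFinite K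
  have hone : (-1 : K) ≠ 1 := Ring.neg_one_ne_one_of_char_ne_two hK
  have hcard : 1 < Fintype.card K := Fintype.one_lt_card
  rw [Nat.card_eq_fintype_card]
  rcases eq_or_ne a 0 with rfl | ha
  · simp [zero_pow (by lia : Fintype.card K / 2 ≠ 0)]
  · rw [FiniteField.isSquare_iff hK ha]
    exact ⟨fun h h' ↦ hone (h.symm.trans h'), (FiniteField.pow_dichotomy hK ha).resolve_left⟩

theorem coeff_pow_add_coeff_pow_eq_zero_of_not_isSquare (hK : ringChar K ≠ 2) {f : K[X]}
    (hdeg : f.natDegree ≤ 2) (hf : ∀ d : K, d ≠ 0 → ¬IsSquare (f.eval (d ^ 2))) {i : ℕ}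
    (hi : 0 < i) (hi' : i < Nat.card K / 2) :
    (f ^ (Nat.card K / 2)).coeff i + (f ^ (Nat.card K / 2)).coeff (i + Nat.card K / 2) = 0 := by
  set m := Nat.card K / 2
  have hdvd : X ^ m - 1 ∣ f ^ m + 1 := X_pow_card_div_two_sub_one_dvd hK fun d hd ↦ by
    rw [eval_add, eval_pow, (pow_card_div_two_eq_neg_one_iff hK).2 (hf d hd), eval_one,
      neg_add_cancel]
  have hpow : (f ^ m + 1).natDegree ≤ 2 * m := by
    rw [← C_1, natDegree_add_C, mul_comm]
    exact natDegree_pow_le_of_le m hdeg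
  have := coeff_add_coeff_eq_zero_of_X_pow_sub_one_dvd hdvd hpow hi hi'
  simpa [coeff_one, hi.ne', (by lia : i + m ≠ 0)] using this

theorem exists_card_div_two_eq {p : ℕ} [Fact p.Prime] [CharP K p] (hp : p ≠ 2)
    (hK : p < Nat.card K) : ∃ k, 0 < k ∧ Nat.card K / 2 = p * k + p / 2 := by
  have hdvd : p ∣ Nat.card K := (CharP.cast_eq_zero_iff K p _).1 (by
    have := Fintype.ofFinite K
    rw [Nat.card_eq_fintype_card, FiniteField.cast_card_eq_zero])
  obtain ⟨j, hj⟩ := hdvd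
  have hodd : Odd (p * j) :=
    hj ▸ Nat.odd_iff.2 (natCard_mod_two_of_ringChar_ne_two (by rwa [ringChar.eq K p]))
  obtain ⟨⟨r, rfl⟩, ⟨k, rfl⟩⟩ := Nat.odd_mul.1 hodd
  refine ⟨k, Nat.pos_of_ne_zero ?_, ?_⟩
  · rintro rfl
    lia
  · rw [hj, show (2 * r + 1) * (2 * k + 1) = 2 * ((2 * r + 1) * k + r) + 1 by ring]
    lia

theorem coeff_pow_half_char_add_eq_zero_of_not_isSquare {p k : ℕ} [Fact p.Prime] [CharP K p]
    (hp : p ≠ 2) (hk : 0 < k) (hcard : Nat.card K / 2 = p * k + p / 2) {f : K[X]}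
    (hdeg : f.natDegree ≤ 2) (hf : ∀ d : K, d ≠ 0 → ¬IsSquare (f.eval (d ^ 2))) {i : ℕ}
    (hi : 0 < i) (hip : i ≤ p / 2) :
    (f ^ (p / 2)).coeff i * (f ^ k).coeff 0 ^ p +
      (f ^ (p / 2)).coeff (i + p / 2) * (f ^ k).coeff k ^ p = 0 := by
  have hp_odd : p % 2 = 1 := (Fact.out : p.Prime).eq_two_or_odd.resolve_left hp
  have hdeg_half : (f ^ (p / 2)).natDegree < p :=
    (natDegree_pow_le_of_le (p / 2) hdeg).trans_lt (by lia)
  have hcoeff (j : ℕ) {i : ℕ} (hi : i < p) :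
      (f ^ (p * k + p / 2)).coeff (p * j + i) =
        (f ^ (p / 2)).coeff i * (f ^ k).coeff j ^ p := by
    rw [pow_add, mul_comm, mul_comm p k, pow_mul, coeff_mul_pow_char_add hdeg_half hi]
  have hpk : p ≤ p * k := Nat.le_mul_of_pos_right p hk
  have hfold := coeff_pow_add_coeff_pow_eq_zero_of_not_isSquare (by rwa [ringChar.eq K p]) hdeg hf
    hi (by lia)
  rw [← hcoeff 0 (by lia), ← hcoeff k (by lia), mul_zero, zero_add]
  rwa [hcard, add_left_comm] at hfold

end FiniteField

theorem coeff_quadratic_sq {R : Type*} [CommSemiring R] (a b c : R) (i : ℕ) :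
    ((C a * X ^ 2 + C b * X + C c) ^ 2).coeff i =
      (if i = 4 then a ^ 2 else 0) + (if i = 3 then 2 * a * b else 0) +
        (if i = 2 then b ^ 2 + 2 * a * c else 0) + (if i = 1 then 2 * b * c else 0) +
          (if i = 0 then c ^ 2 else 0) := by
  have hsq : (C a * X ^ 2 + C b * X + C c) ^ 2 =
      C (a ^ 2) * X ^ 4 + C (2 * a * b) * X ^ 3 + C (b ^ 2 + 2 * a * c) * X ^ 2 +
        C (2 * b * c) * X ^ 1 + C (c ^ 2) := by
    simp only [map_add, map_mul, map_pow, map_ofNat]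
    ring
  simp only [hsq, coeff_add, coeff_C_mul_X_pow, coeff_C]

section CharFive

variable {K : Type*} [Field K] [CharP K 5]

variable (K) in
theorem two_ne_zero_of_charP_five : (2 : K) ≠ 0 :=
  Ring.two_ne_zero (by rw [ringChar.eq K 5]; decide)

variable (K) in
theorem three_ne_zero_of_charP_five : (3 : K) ≠ 0 := fun h3 ↦
  two_ne_zero_of_charP_five K (by linear_combination CharP.ofNat_eq_zero K 5 - h3)

theorem discrim_eq_zero_of_forall_not_isSquare [Finite K] (hK : 5 < Nat.card K) {a b c : K}
    (hb : b ≠ 0) (hc : c ≠ 0)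
    (h : ∀ d : K, d ≠ 0 → ¬IsSquare (a * d ^ 4 + b * d ^ 2 + c)) : discrim a b c = 0 := by
  have : Fact (Nat.Prime 5) := ⟨by norm_num⟩
  set f : K[X] := C a * X ^ 2 + C b * X + C c with hf
  obtain ⟨k, hk, hcard⟩ := exists_card_div_two_eq (p := 5) (by norm_num) hK
  have hfold {i : ℕ} := coeff_pow_half_char_add_eq_zero_of_not_isSquare (by norm_num) hk hcard
    (natDegree_quadratic_le : f.natDegree ≤ 2)
    (fun d hd ↦ by simpa [hf, ← pow_mul] using h d hd) (i := i)
  have hu : (f ^ k).coeff 0 ^ 5 ≠ 0 := by simp [coeff_zero_eq_eval_zero, hf, hc]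
  generalize (f ^ k).coeff 0 ^ 5 = u, (f ^ k).coeff k ^ 5 = v at hu hfold
  have hcoeff₁ : 2 * b * c * u + 2 * a * b * v = 0 := by
    have h₁ : (f ^ 2).coeff 1 = 2 * b * c := by simp [hf, coeff_quadratic_sq]
    have h₃ : (f ^ 2).coeff 3 = 2 * a * b := by simp [hf, coeff_quadratic_sq]
    rw [← h₁, ← h₃]
    exact hfold one_pos (by norm_num)
  have hcoeff₂ : (b ^ 2 + 2 * a * c) * u + a ^ 2 * v = 0 := by
    have h₂ : (f ^ 2).coeff 2 = b ^ 2 + 2 * a * c := by simp [hf, coeff_quadratic_sq]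
    have h₄ : (f ^ 2).coeff 4 = a ^ 2 := by simp [hf, coeff_quadratic_sq]
    rw [← h₂, ← h₄]
    exact hfold two_pos le_rfl
  have hcoeff₁' : c * u + a * v = 0 :=
    mul_left_cancel₀ (mul_ne_zero (two_ne_zero_of_charP_five K) hb)
      (by linear_combination hcoeff₁)
  have hdisc : discrim a b c * u = 0 := by
    rw [discrim]
    linear_combination hcoeff₂ - a * hcoeff₁' - a * c * u * CharP.ofNat_eq_zero K 5
  exact (mul_eq_zero.1 hdisc).resolve_right hu

theorem quintic_injective_iff_forall_ne (T N : K) :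
    Function.Injective (fun t : K ↦ t ^ 5 + T * t ^ 3 + N * t) ↔
      ∀ d s : K, d ≠ 0 → d ^ 4 - T * d ^ 2 + N ≠ 3 * T * s ^ 2 := by
  have h5 := CharP.ofNat_eq_zero K 5
  -- `x = 3 * (s + d)` and `y = 3 * (s - d)` solve `x + y = s`, `x - y = d`, because `6 = 1`.
  have hdiff (d s : K) : ((3 * (s + d)) ^ 5 + T * (3 * (s + d)) ^ 3 + N * (3 * (s + d))) -
      ((3 * (s - d)) ^ 5 + T * (3 * (s - d)) ^ 3 + N * (3 * (s - d))) =
        d * (d ^ 4 - T * d ^ 2 + N - 3 * T * s ^ 2) := by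
    linear_combination (97 * d ^ 5 + 11 * T * d ^ 3 + 33 * T * s ^ 2 * d + N * d
            + 486 * s ^ 4 * d + 972 * s ^ 2 * d ^ 3) * h5
  constructor
  · intro hinj d s hd heq
    have hst : 3 * (s + d) = 3 * (s - d) := hinj (sub_eq_zero.1 (by
      simp only [hdiff, heq, sub_self, mul_zero]))
    exact hd (by linear_combination hst - d * h5)
  · intro hne x y hxy
    by_contra hxy'
    refine hne (x - y) (x + y) (sub_ne_zero.2 hxy') (sub_eq_zero.1 ?_)
    refine (mul_eq_zero.1 ?_).resolve_left (sub_ne_zero.2 hxy')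
    have hx : 3 * ((x + y) + (x - y)) = x := by linear_combination x * h5
    have hy : 3 * ((x + y) - (x - y)) = y := by linear_combination y * h5
    rw [← hdiff, hx, hy]
    exact sub_eq_zero.2 hxy

theorem exists_not_isSquare_of_forall_ne [Finite K] (hK : 5 < Nat.card K) {T N : K} (hT : T ≠ 0)
    (hN : N ≠ 0) (hne : ∀ d s : K, d ≠ 0 → d ^ 4 - T * d ^ 2 + N ≠ 3 * T * s ^ 2) :
    ∃ a : K, ¬IsSquare a ∧ T = 2 * a ∧ N = a ^ 2 := by
  have h5 := CharP.ofNat_eq_zero K 5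
  have hT3 : 3 * T ≠ 0 := mul_ne_zero (three_ne_zero_of_charP_five K) hT
  have hdisc : discrim (3 * T) (-(3 * T) * T) (3 * T * N) = 0 := by
    refine discrim_eq_zero_of_forall_not_isSquare hK (mul_ne_zero (neg_ne_zero.2 hT3) hT)
      (mul_ne_zero hT3 hN) ?_
    rintro d hd ⟨y, hy⟩
    obtain ⟨s, rfl⟩ : ∃ s, 3 * T * s = y := ⟨y / (3 * T), mul_div_cancel₀ y hT3⟩
    exact hne d s hd (mul_left_cancel₀ hT3 (by linear_combination hy))
  have hN_eq : N = (3 * T) ^ 2 := by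
    have hmul : (3 * T) ^ 2 * (T ^ 2 - 4 * N) = 0 := by rw [← hdisc, discrim]; ring
    have := (mul_eq_zero.1 hmul).resolve_left (pow_ne_zero 2 hT3)
    linear_combination this + (N - 2 * T ^ 2) * h5
  refine ⟨3 * T, ?_, by linear_combination -T * h5, hN_eq⟩
  rintro ⟨b, hb⟩
  have hb0 : b ≠ 0 := by
    rintro rfl
    exact hT3 (by rw [hb, zero_mul])
  exact hne b 0 hb0 (by linear_combination hN_eq + (3 * T - b ^ 2) * hb + T * b ^ 2 * h5)

theorem quintic_injective_iff [Finite K] (hK : 5 < Nat.card K) {T N : K} (hN : N ≠ 0) :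
    Function.Injective (fun t : K ↦ t ^ 5 + T * t ^ 3 + N * t) ↔
      (T = 0 ∧ ∀ d : K, d ^ 4 ≠ -N) ∨ ∃ a : K, ¬IsSquare a ∧ T = 2 * a ∧ N = a ^ 2 := by
  have h5 := CharP.ofNat_eq_zero K 5
  rw [quintic_injective_iff_forall_ne]
  constructor
  · intro hne
    rcases eq_or_ne T 0 with rfl | hT
    · refine .inl ⟨rfl, fun d hd ↦ ?_⟩
      rcases eq_or_ne d 0 with rfl | hd0
      · exact hN (by linear_combination hd)
      · exact hne d 0 hd0 (by linear_combination hd)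
    · exact .inr (exists_not_isSquare_of_forall_ne hK hT hN hne)
  · rintro (⟨rfl, hd⟩ | ⟨a, ha, rfl, rfl⟩) d s _ heq
    · exact hd d (by linear_combination heq)
    · have hsq : (d ^ 2 - a) ^ 2 = a * s ^ 2 := by linear_combination heq + a * s ^ 2 * h5
      rcases eq_or_ne s 0 with rfl | hs
      · have : (d ^ 2 - a) ^ 2 = 0 := by linear_combination hsq
        exact ha ⟨d, by linear_combination -(pow_eq_zero_iff two_ne_zero).1 this⟩
      · exact ha ⟨(d ^ 2 - a) / s, by field_simp; linear_combination -hsq⟩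

end CharFive

section Norm

variable {K L : Type*} [Field K] [Field L] [Finite L] [Algebra K L]

theorem injective_of_injective_mul_comp_norm {h : K → L}
    (hinj : Function.Injective (fun x : L ↦ x * h (Algebra.norm K x))) :
    Function.Injective (fun t : K ↦ t * Algebra.norm K (h t)) := by
  intro t s hts
  obtain ⟨z, rfl⟩ := FiniteField.norm_surjective K L t
  obtain ⟨w, rfl⟩ := FiniteField.norm_surjective K L s
  beta_reduce at hts
  rw [← map_mul, ← map_mul] at hts
  set u := z * h (Algebra.norm K z) with hu
  set v := w * h (Algebra.norm K w)
  rcases eq_or_ne u 0 with hu0 | hu0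
  · have hv0 : v = 0 := by rwa [hu0, Algebra.norm_zero, eq_comm, Algebra.norm_eq_zero_iff] at hts
    rw [hinj (hu0.trans hv0.symm)]
  · have hnorm_one : Algebra.norm K (v / u) = 1 :=
      mul_right_cancel₀ (Algebra.norm_ne_zero_iff.2 hu0)
        (by rw [← map_mul, div_mul_cancel₀ _ hu0, hts, one_mul])
    have hnorm : Algebra.norm K (v / u * z) = Algebra.norm K z := by
      rw [map_mul, hnorm_one, one_mul]
    have hw : v / u * z = w := hinj (by
      beta_reduce
      rw [hnorm, mul_assoc, ← hu, div_mul_cancel₀ _ hu0])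
    rw [← hw, hnorm]

theorem injective_mul_comp_norm_iff (h : K → L) :
    Function.Injective (fun x : L ↦ x * h (Algebra.norm K x)) ↔
      Function.Injective (fun t : K ↦ t * Algebra.norm K (h t)) := by
  refine ⟨injective_of_injective_mul_comp_norm, fun hinj x y hxy ↦ ?_⟩
  have hnorm : Algebra.norm K x = Algebra.norm K y :=
    hinj (by simpa only [map_mul] using congrArg (Algebra.norm K) hxy)
  beta_reduce at hxy
  rw [hnorm] at hxy
  rcases eq_or_ne (h (Algebra.norm K y)) 0 with h0 | h0
  · have hy : Algebra.norm K y = 0 := hinj (by simp [h0])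
    rw [Algebra.norm_eq_zero_iff.1 hy, Algebra.norm_eq_zero_iff.1 (hnorm.trans hy)]
  · exact mul_right_cancel₀ h0 hxy

theorem mem_range_algebraMap_iff_pow_card_eq_self {x : L} :
    x ∈ Set.range (algebraMap K L) ↔ x ^ Nat.card K = x := by
  have : Finite K := Finite.of_injective _ (algebraMap K L).injective
  have := Fintype.ofFinite K
  constructor
  · rintro ⟨a, rfl⟩
    rw [← map_pow, Nat.card_eq_fintype_card, FiniteField.pow_card]
  · intro hx
    have : Fact (ringChar K).Prime := ⟨CharP.char_is_prime K _⟩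
    refine (IsGalois.mem_range_algebraMap_iff_fixed x).2 fun g ↦ ?_
    obtain ⟨i, hi⟩ := FiniteField.exists_forall_apply_eq_pow K (ringChar K) L g
    rw [hi]
    simpa only [pow_iterate] using Function.iterate_fixed (f := (· ^ Nat.card K)) hx i

theorem exists_not_isSquare_algebraMap_eq_iff (hK : ringChar K ≠ 2) {α : L} :
    (∃ a : K, ¬IsSquare a ∧ algebraMap K L a = α) ↔ α ^ (Nat.card K / 2) = -1 := by
  have : Finite K := Finite.of_injective _ (algebraMap K L).injective
  have hmap (a : K) : algebraMap K L a ^ (Nat.card K / 2) = -1 ↔ ¬IsSquare a := by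
    rw [← pow_card_div_two_eq_neg_one_iff hK, ← (algebraMap K L).injective.eq_iff]
    simp
  constructor
  · rintro ⟨a, ha, rfl⟩
    exact (hmap a).2 ha
  · intro hα
    have hodd := natCard_mod_two_of_ringChar_ne_two hK
    have hfixed : α ^ Nat.card K = α := by
      rw [show Nat.card K = Nat.card K / 2 * 2 + 1 by lia, pow_succ, pow_mul, hα]
      ring
    obtain ⟨a, rfl⟩ := mem_range_algebraMap_iff_pow_card_eq_self.2 hfixed
    exact ⟨a, (hmap a).1 hα, rfl⟩

end Norm

section Quadratic

variable {K L : Type*} [Field K] [Field L] [Finite L] [Algebra K L]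
  [Algebra.IsQuadraticExtension K L]

theorem algebraMap_trace_eq_add_pow (α : L) :
    algebraMap K L (Algebra.trace K L α) = α + α ^ Nat.card K := by
  simp [FiniteField.algebraMap_trace_eq_sum_pow, Algebra.IsQuadraticExtension.finrank_eq_two K L,
    Finset.sum_range_succ]

theorem algebraMap_norm_eq_mul_pow (α : L) :
    algebraMap K L (Algebra.norm K α) = α * α ^ Nat.card K := by
  simp [FiniteField.algebraMap_norm_eq_prod_pow, Algebra.IsQuadraticExtension.finrank_eq_two K L,
    Finset.prod_range_succ]

theorem sq_eq_trace_mul_sub_norm (α : L) :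
    α ^ 2 = algebraMap K L (Algebra.trace K L α) * α - algebraMap K L (Algebra.norm K α) := by
  rw [algebraMap_trace_eq_add_pow, algebraMap_norm_eq_mul_pow]
  ring

theorem norm_algebraMap_add (a : K) (α : L) :
    Algebra.norm K (algebraMap K L a + α) =
      a ^ 2 + Algebra.trace K L α * a + Algebra.norm K α := by
  have : Finite K := Finite.of_injective _ (algebraMap K L).injective
  have := Fintype.ofFinite K
  have hadd : (algebraMap K L a + α) ^ Nat.card K = algebraMap K L a + α ^ Nat.card K := by
    rw [Nat.card_eq_fintype_card]
    simpa using map_add (FiniteField.frobeniusAlgHom K L) (algebraMap K L a) α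
  apply (algebraMap K L).injective
  simp only [map_add, map_mul, map_pow, algebraMap_norm_eq_mul_pow, algebraMap_trace_eq_add_pow,
    hadd]
  ring

theorem algebraMap_eq_iff_trace_norm {a : K} {α : L} :
    algebraMap K L a = α ↔ Algebra.trace K L α = 2 * a ∧ Algebra.norm K α = a ^ 2 := by
  have hrank := Algebra.IsQuadraticExtension.finrank_eq_two K L
  constructor
  · rintro rfl
    simp [Algebra.trace_algebraMap, Algebra.norm_algebraMap, hrank]
  · rintro ⟨htrace, hnorm⟩
    have hα := sq_eq_trace_mul_sub_norm (K := K) α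
    rw [htrace, hnorm, map_mul, map_pow, map_ofNat] at hα
    have : (algebraMap K L a - α) ^ 2 = 0 := by linear_combination hα
    exact sub_eq_zero.1 ((pow_eq_zero_iff two_ne_zero).1 this)

theorem trace_eq_zero_iff_pow_card_sub_one_eq_neg_one {α : L} (hα : α ≠ 0) :
    Algebra.trace K L α = 0 ↔ α ^ (Nat.card K - 1) = -1 := by
  have : Finite K := Finite.of_injective _ (algebraMap K L).injective
  have hpow : α ^ Nat.card K = α ^ (Nat.card K - 1) * α := by
    rw [← pow_succ, Nat.sub_add_cancel Nat.card_pos]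
  have htrace : algebraMap K L (Algebra.trace K L α) = (α ^ (Nat.card K - 1) + 1) * α := by
    rw [algebraMap_trace_eq_add_pow, hpow]
    ring
  rw [← map_eq_zero (algebraMap K L), htrace, mul_eq_zero, or_iff_left hα, eq_neg_iff_add_eq_zero]

theorem pow_four_ne_neg_norm_of_trace_eq_zero (hK : (2 : K) ≠ 0) {α : L} (hα : α ≠ 0)
    (htrace : Algebra.trace K L α = 0) (d : K) : d ^ 4 ≠ -Algebra.norm K α := by
  intro hd
  have hα_range {b : K} (hb : algebraMap K L b = α) : False := by
    have hb0 := (algebraMap_eq_iff_trace_norm.1 hb).1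
    rw [htrace, eq_comm, mul_eq_zero, or_iff_right hK] at hb0
    exact hα (by rw [← hb, hb0, map_zero])
  have hsq : algebraMap K L d ^ 4 = α ^ 2 := by
    rw [sq_eq_trace_mul_sub_norm (K := K) α, htrace, ← map_pow, hd]
    simp
  rw [show 4 = 2 * 2 from rfl, pow_mul, sq_eq_sq_iff_eq_or_eq_neg] at hsq
  rcases hsq with h | h
  · exact hα_range (b := d ^ 2) (by rw [map_pow, h])
  · exact hα_range (b := -d ^ 2) (by rw [map_neg, map_pow, h, neg_neg])

theorem injective_pow_add_mul_iff [CharP K 5] (hK : 5 < Nat.card K) {α : L} (hα : α ≠ 0) :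
    Function.Injective (fun x : L ↦ x ^ (2 * Nat.card K + 3) + α * x) ↔
      Algebra.trace K L α = 0 ∨ ∃ a : K, ¬IsSquare a ∧ algebraMap K L a = α := by
  have : Finite K := Finite.of_injective _ (algebraMap K L).injective
  have hmul (x : L) : x ^ (2 * Nat.card K + 3) + α * x =
      x * (algebraMap K L (Algebra.norm K x ^ 2) + α) := by
    rw [map_pow, algebraMap_norm_eq_mul_pow]
    ring
  have hquintic (t : K) : t * Algebra.norm K (algebraMap K L (t ^ 2) + α) =
      t ^ 5 + Algebra.trace K L α * t ^ 3 + Algebra.norm K α * t := by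
    rw [norm_algebraMap_add]
    ring
  simp_rw [hmul]
  rw [injective_mul_comp_norm_iff (fun t : K ↦ algebraMap K L (t ^ 2) + α)]
  simp_rw [hquintic, quintic_injective_iff hK (Algebra.norm_ne_zero_iff.2 hα),
    algebraMap_eq_iff_trace_norm]
  exact or_congr_left (and_iff_left_of_imp
    (pow_four_ne_neg_norm_of_trace_eq_zero (two_ne_zero_of_charP_five K) hα))

end Quadratic

theorem exists_algebra_galoisField_finrank_eq {p n m : ℕ} [Fact p.Prime] (hn : n ≠ 0)
    {F : Type*} [Field F] (hF : Nat.card F = (p ^ n) ^ m) :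
    ∃ _ : Algebra (GaloisField p n) F, Module.finrank (GaloisField p n) F = m := by
  have hp : 1 < p := (Fact.out : p.Prime).one_lt
  have : Finite F := Nat.finite_of_card_ne_zero (by rw [hF]; positivity)
  have : CharP F p := by
    have := Fintype.ofFinite F
    exact charP_of_card_eq_prime_pow (f := n * m) (by rw [← Nat.card_eq_fintype_card, hF, pow_mul])
  let := ZMod.algebra F p
  have hfinrank : Module.finrank (ZMod p) F = n * m := by
    have := FiniteField.pow_finrank_eq_natCard p F
    rw [hF, ← pow_mul] at this
    exact Nat.pow_right_injective hp this
  obtain ⟨i⟩ := FiniteField.nonempty_algHom_of_finrank_dvd (F := ZMod p) (K := GaloisField p n)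
    (L := F) (by rw [hfinrank, GaloisField.finrank p hn]; exact dvd_mul_right n m)
  refine ⟨i.toAlgebra, ?_⟩
  let := i.toAlgebra
  have := Module.natCard_eq_pow_finrank (K := GaloisField p n) (V := F)
  rw [hF, GaloisField.card p n hn] at this
  exact (Nat.pow_right_injective (Nat.one_lt_pow hn hp) this).symm

theorem stmt_15 (n Q : ℕ) (hQ : Q = 5 ^ n) (hQ5 : 5 < Q)
    (F : Type*) [Field F] [Fintype F] (hF : Fintype.card F = Q ^ 2)
    (α : F) (hα : α ≠ 0) :
    Function.Bijective (fun x : F => x ^ (2 * Q + 3) + α * x) ↔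
      α ^ (Q - 1) = -1 ∨ α ^ ((Q - 1) / 2) = -1 := by
  have : Fact (Nat.Prime 5) := ⟨by norm_num⟩
  have hn : n ≠ 0 := by
    rintro rfl
    lia
  obtain ⟨_, hrank⟩ := exists_algebra_galoisField_finrank_eq (p := 5) hn (F := F)
    (by rw [Nat.card_eq_fintype_card, hF, hQ])
  have : Algebra.IsQuadraticExtension (GaloisField 5 n) F := ⟨hrank⟩
  have hcard : Nat.card (GaloisField 5 n) = Q := by rw [GaloisField.card 5 n hn, hQ]
  have hodd : Odd Q := hQ ▸ Odd.pow (by decide)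
  rw [← Finite.injective_iff_bijective, show (Q - 1) / 2 = Q / 2 by grind, ← hcard,
    injective_pow_add_mul_iff (hcard ▸ hQ5) hα,
    trace_eq_zero_iff_pow_card_sub_one_eq_neg_one hα,
    exists_not_isSquare_algebraMap_eq_iff (by rw [ringChar.eq _ 5]; decide)]
end
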